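/- arXiv:1309.2038 — 7 statements merged into one kernel-verified Lean document; each statement's English description precedes it below -/
import Mathlib

section
/- Let E be a finite set, w : E → ℝ a nonnegative weight function, γ > 0 a real number, and T a natural number. Suppose I₀ = ∅ and for each t ∈ {1,…,T} we have I_t = (I_{t−1} \ J_t) ∪ A_t, where J_t ⊆ I_{t−1}, A_t ⊆ E with A_t ∩ (I_{t−1} \ J_t) = ∅, and ∑_{e∈A_t} w(e) ≥ (1+γ)·∑_{e∈J_t} w(e). Let K = (⋃_{t=0}^{T} I_t) \ I_T. Then ∑_{e∈K} w(e) ≤ (1/γ)·∑_{e∈I_T} w(e). -/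
/-!
Every step raises the weight of the solution by at least `γ` times the weight of `J t`, so by
telescoping `γ * ∑ t, w (J t) ≤ w (I T) - w (I 0)`. An element that was once in the solution but is
not in `I T` was removed at some step, hence lies in some `J t`.
-/

section Augmentation

open Finset

variable {α : Type*} [DecidableEq α]

section OrderedAddCommMonoid

variable {M : Type*} [AddCommMonoid M] [PartialOrder M] [IsOrderedAddMonoid M] {w : α → M}

theorem sum_union_le_sum_add_sum (hw : ∀ e, 0 ≤ w e) (s t : Finset α) :
    ∑ e ∈ s ∪ t, w e ≤ ∑ e ∈ s, w e + ∑ e ∈ t, w e := by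
  rw [← sum_union_inter]
  exact le_add_of_nonneg_right (sum_nonneg fun e _ ↦ hw e)

theorem sum_biUnion_le_sum_sum {ι : Type*} (hw : ∀ e, 0 ≤ w e) (s : Finset ι)
    (f : ι → Finset α) :
    ∑ e ∈ s.biUnion f, w e ≤ ∑ i ∈ s, ∑ e ∈ f i, w e := by
  rw [← sup_eq_biUnion]
  exact apply_sup_le_sum (f := fun t : Finset α ↦ ∑ e ∈ t, w e) sum_empty
    (sum_union_le_sum_add_sum hw _ _) s

theorem sum_le_sum_sdiff_add_sum (hw : ∀ e, 0 ≤ w e) (s t : Finset α) :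
    ∑ e ∈ s, w e ≤ ∑ e ∈ s \ t, w e + ∑ e ∈ t, w e := by
  have hsub : s ⊆ s \ t ∪ t := by
    rw [sdiff_union_self_eq_union]
    exact subset_union_left
  exact (sum_le_sum_of_subset_of_nonneg hsub fun e _ _ ↦ hw e).trans
    (sum_union_le_sum_add_sum hw _ _)

end OrderedAddCommMonoid

theorem biUnion_range_succ_sdiff_subset_biUnion {I J : ℕ → Finset α} {n : ℕ}
    (hkeep : ∀ t < n, I t \ J t ⊆ I (t + 1)) :
    (range (n + 1)).biUnion I \ I n ⊆ (range n).biUnion J := by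
  intro e he
  obtain ⟨⟨s, hsn, hes⟩, hen⟩ : (∃ s < n + 1, e ∈ I s) ∧ e ∉ I n := by
    simpa only [mem_sdiff, mem_biUnion, mem_range] using he
  by_contra hJ
  have not_removed : ∀ t < n, e ∉ J t := by
    simpa only [mem_biUnion, mem_range, not_exists, not_and] using hJ
  have stays : ∀ t, s ≤ t → t ≤ n → e ∈ I t := by
    intro t hst
    induction t, hst using Nat.le_induction with
    | base => exact fun _ ↦ hes
    | succ t _ ih =>
      exact fun htn ↦ hkeep t htn (mem_sdiff.2 ⟨ih (Nat.le_of_succ_le htn), not_removed t htn⟩)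
  exact hen (stays n (Nat.le_of_lt_succ hsn) le_rfl)

section OrderedRing

variable {R : Type*} [Ring R] [PartialOrder R] [IsOrderedRing R] {w : α → R} {γ : R}

theorem sum_add_mul_sum_le_sum_sdiff_union (hw : ∀ e, 0 ≤ w e) {S J A : Finset α}
    (hdisj : Disjoint (S \ J) A) (hgain : (1 + γ) * ∑ e ∈ J, w e ≤ ∑ e ∈ A, w e) :
    ∑ e ∈ S, w e + γ * ∑ e ∈ J, w e ≤ ∑ e ∈ S \ J ∪ A, w e :=
  calc
    ∑ e ∈ S, w e + γ * ∑ e ∈ J, w e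
      ≤ ∑ e ∈ S \ J, w e + ∑ e ∈ J, w e + γ * ∑ e ∈ J, w e := by
        gcongr
        exact sum_le_sum_sdiff_add_sum hw S J
    _ = ∑ e ∈ S \ J, w e + (1 + γ) * ∑ e ∈ J, w e := by rw [one_add_mul, add_assoc]
    _ ≤ ∑ e ∈ S \ J, w e + ∑ e ∈ A, w e := by gcongr
    _ = ∑ e ∈ S \ J ∪ A, w e := (sum_union hdisj).symm

theorem mul_sum_range_le_sub {a b : ℕ → R} {n : ℕ}
    (hstep : ∀ t < n, a t + γ * b t ≤ a (t + 1)) :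
    γ * ∑ t ∈ range n, b t ≤ a n - a 0 := by
  rw [mul_sum, ← sum_range_sub]
  exact sum_le_sum fun t ht ↦ le_sub_iff_add_le'.2 (hstep t (mem_range.1 ht))

theorem mul_sum_biUnion_sdiff_le_sub (hw : ∀ e, 0 ≤ w e) (hγ : 0 ≤ γ)
    {I J A : ℕ → Finset α} {n : ℕ}
    (hdisj : ∀ t < n, Disjoint (I t \ J t) (A t))
    (hstep : ∀ t < n, I (t + 1) = I t \ J t ∪ A t)
    (hgain : ∀ t < n, (1 + γ) * ∑ e ∈ J t, w e ≤ ∑ e ∈ A t, w e) :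
    γ * ∑ e ∈ (range (n + 1)).biUnion I \ I n, w e ≤ ∑ e ∈ I n, w e - ∑ e ∈ I 0, w e := by
  have removed_subset : (range (n + 1)).biUnion I \ I n ⊆ (range n).biUnion J :=
    biUnion_range_succ_sdiff_subset_biUnion fun t ht ↦ hstep t ht ▸ subset_union_left
  calc
    γ * ∑ e ∈ (range (n + 1)).biUnion I \ I n, w e
      ≤ γ * ∑ e ∈ (range n).biUnion J, w e := by
        gcongr
        exact fun e _ _ ↦ hw e
    _ ≤ γ * ∑ t ∈ range n, ∑ e ∈ J t, w e := by
        gcongr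
        exact sum_biUnion_le_sum_sum hw _ _
    _ ≤ ∑ e ∈ I n, w e - ∑ e ∈ I 0, w e :=
        mul_sum_range_le_sub (a := fun t ↦ ∑ e ∈ I t, w e) fun t ht ↦
          hstep t ht ▸ sum_add_mul_sum_le_sum_sdiff_union hw (hdisj t ht) (hgain t ht)

end OrderedRing

theorem stmt_0_general {𝕜 : Type*} [Field 𝕜] [LinearOrder 𝕜] [IsStrictOrderedRing 𝕜]
    (w : α → 𝕜) (hw : ∀ e, 0 ≤ w e) (γ : 𝕜) (hγ : 0 < γ) (T : ℕ) (I J A : ℕ → Finset α)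
    (hA : ∀ t, 1 ≤ t → t ≤ T → A t ∩ (I (t - 1) \ J t) = ∅)
    (hstep : ∀ t, 1 ≤ t → t ≤ T → I t = (I (t - 1) \ J t) ∪ A t)
    (hgain : ∀ t, 1 ≤ t → t ≤ T → (1 + γ) * ∑ e ∈ J t, w e ≤ ∑ e ∈ A t, w e) :
    ∑ e ∈ (range (T + 1)).biUnion I \ I T, w e
      ≤ (1 / γ) * (∑ e ∈ I T, w e - ∑ e ∈ I 0, w e) := by
  have hdisj : ∀ t < T, Disjoint (I t \ J (t + 1)) (A (t + 1)) := fun t ht ↦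
    (disjoint_iff_inter_eq_empty.2 (hA (t + 1) t.succ_pos ht)).symm
  rw [one_div, le_inv_mul_iff₀ hγ]
  exact mul_sum_biUnion_sdiff_le_sub hw hγ.le hdisj
    (fun t ht ↦ hstep (t + 1) t.succ_pos ht) (fun t ht ↦ hgain (t + 1) t.succ_pos ht)

end Augmentation

/-- Lemma 3.1 (combinatorial form): in any sequence of augmentation steps in
which a subset `J t` of the current solution is replaced by a set `A t` of
weight at least `(1+γ)` times the weight of `J t`, the total weight of elements
that were ever in the solution but are absent from the final solution is at
most `1/γ` times the weight of the final solution. -/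
theorem stmt_0 {α : Type*} [Fintype α] [DecidableEq α]
    (w : α → ℝ) (hw : ∀ e, 0 ≤ w e)
    (γ : ℝ) (hγ : 0 < γ) (T : ℕ)
    (I J A : ℕ → Finset α)
    (hI0 : I 0 = ∅)
    (hJ : ∀ t, 1 ≤ t → t ≤ T → J t ⊆ I (t - 1))
    (hA : ∀ t, 1 ≤ t → t ≤ T → A t ∩ (I (t - 1) \ J t) = ∅)
    (hstep : ∀ t, 1 ≤ t → t ≤ T → I t = (I (t - 1) \ J t) ∪ A t)
    (hgain : ∀ t, 1 ≤ t → t ≤ T →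
      (1 + γ) * ∑ e ∈ J t, w e ≤ ∑ e ∈ A t, w e) :
    ∑ e ∈ ((Finset.range (T + 1)).biUnion (fun t => I t)) \ I T, w e
      ≤ (1 / γ) * ∑ e ∈ I T, w e := by
  simpa [hI0] using stmt_0_general w hw γ hγ T I J A hA hstep hgain
end

section
/- Under the stream setup, if I ⊆ E satisfies {e' ∈ I : e' < e} ⊆ C(e) for every e ∈ I, then w(I) ≤ f(I). -/
/-- A submodular function on a lattice. For set functions on `Finset E` this is the usual condition
`f (A ∪ B) + f (A ∩ B) ≤ f A + f B`. -/
def IsSubmodular {L β : Type*} [Lattice L] [Add β] [LE β] (f : L → β) : Prop :=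
  ∀ a b, f (a ⊔ b) + f (a ⊓ b) ≤ f a + f b

theorem IsSubmodular.insert_sub_le_insert_sub {α β : Type*} [DecidableEq α]
    [AddCommGroup β] [PartialOrder β] [IsOrderedAddMonoid β] {f : Finset α → β}
    (hf : IsSubmodular f) {A B : Finset α} {e : α} (hAB : A ⊆ B) (he : e ∉ B) :
    f (insert e B) - f B ≤ f (insert e A) - f A := by
  have union_eq : insert e A ∪ B = insert e B := by
    rw [Finset.insert_union, Finset.union_eq_right.mpr hAB]
  have inter_eq : insert e A ∩ B = A := by
    rw [Finset.insert_inter_of_notMem he, Finset.inter_eq_left.mpr hAB]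
  have h : f (insert e A ∪ B) + f (insert e A ∩ B) ≤ f (insert e A) + f B := hf _ _
  rw [union_eq, inter_eq] at h
  rwa [sub_le_sub_iff]

section LinearOrder

variable {α β : Type*} [LinearOrder α] [AddCommGroup β]

theorem sum_insert_filter_lt_sub (f : Finset α → β) (I : Finset α) :
    ∑ e ∈ I, (f (insert e (I.filter (· < e))) - f (I.filter (· < e))) = f I - f ∅ := by
  induction I using Finset.induction_on_max with
  | empty => simp
  | insert a s hs ih =>
    have ha : a ∉ s := fun h => lt_irrefl a (hs a h)
    have filter_lt_max : (insert a s).filter (· < a) = s := by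
      rw [Finset.filter_insert, if_neg (lt_irrefl a), Finset.filter_true_of_mem hs]
    have filter_lt_of_mem : ∀ e ∈ s, (insert a s).filter (· < e) = s.filter (· < e) :=
      fun e he => by rw [Finset.filter_insert, if_neg (hs e he).not_gt]
    have sum_eq : ∑ e ∈ s, (f (insert e ((insert a s).filter (· < e))) -
        f ((insert a s).filter (· < e))) = f s - f ∅ := by
      rw [← ih]
      exact Finset.sum_congr rfl fun e he => by rw [filter_lt_of_mem e he]
    rw [Finset.sum_insert ha, filter_lt_max, sum_eq, sub_add_sub_cancel]

theorem stmt_1_general [PartialOrder β] [IsOrderedAddMonoid β] {f : Finset α → β}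
    (hf : IsSubmodular f) {C : α → Finset α} {I : Finset α}
    (hC : ∀ e ∈ I, e ∉ C e) (hI : ∀ e ∈ I, I.filter (· < e) ⊆ C e) :
    ∑ e ∈ I, (f (insert e (C e)) - f (C e)) ≤ f I - f ∅ :=
  calc ∑ e ∈ I, (f (insert e (C e)) - f (C e))
    _ ≤ ∑ e ∈ I, (f (insert e (I.filter (· < e))) - f (I.filter (· < e))) :=
      Finset.sum_le_sum fun e he => hf.insert_sub_le_insert_sub (hI e he) (hC e he)
    _ = f I - f ∅ := sum_insert_filter_lt_sub f I

end LinearOrder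

/-- Lemma 3.2 (combinatorial form): under the stream setup, if every earlier
element of `I` is in `C e` for every `e ∈ I`, then `w(I) ≤ f(I)`, where
`w(e) := f(C(e) ∪ {e}) − f(C(e))`. -/
theorem stmt_1 {α : Type*} [Fintype α] [LinearOrder α]
    (f : Finset α → ℝ)
    (hsub : ∀ A B : Finset α, f (A ∪ B) + f (A ∩ B) ≤ f A + f B)
    (hmono : ∀ A B : Finset α, A ⊆ B → f A ≤ f B)
    (hproper : f ∅ = 0)
    (hnonneg : ∀ A : Finset α, 0 ≤ f A)
    (C : α → Finset α)
    (hC : ∀ e, ∀ e' ∈ C e, e' < e)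
    (I : Finset α)
    (hI : ∀ e ∈ I, I.filter (fun e' => e' < e) ⊆ C e) :
    ∑ e ∈ I, (f (insert e (C e)) - f (C e)) ≤ f I := by
  have hself : ∀ e ∈ I, e ∉ C e := fun e _ he => lt_irrefl e (hC e e he)
  simpa only [hproper, sub_zero] using stmt_1_general hsub hself hI
end

section
/- Under the stream setup, if B ⊆ E satisfies C(e) ⊆ {e' ∈ B : e' < e} for every e ∈ B, then f(B) ≤ w(B). -/
/-!
Adding the elements of `B` in increasing order telescopes `f B - f ∅` into the gains of each `e ∈ B`
over the earlier elements of `B`. Since `C e` is contained in those earlier elements, diminishing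
returns bounds each such gain by the gain of `e` over `C e`.
-/

/-- Submodularity of a function on a lattice; on `Finset α` the operations `⊔` and `⊓` are union and
intersection, which gives submodular set functions. -/
def Submodular {L M : Type*} [Lattice L] [Add M] [LE M] (f : L → M) : Prop :=
  ∀ a b, f (a ⊔ b) + f (a ⊓ b) ≤ f a + f b

/-- The marginal gain `f(e | A) = f(A ∪ {e}) - f(A)` of `e` over `A`; the weight of a stream element
`e` is its marginal gain over `C e`. -/
def marginalGain {α M : Type*} [DecidableEq α] [Sub M] (f : Finset α → M) (A : Finset α) (e : α) :
    M :=
  f (insert e A) - f A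

section

variable {α M : Type*} [AddCommGroup M]

theorem Submodular.marginalGain_le_of_subset [DecidableEq α] [PartialOrder M] [IsOrderedAddMonoid M]
    {f : Finset α → M} (hf : Submodular f) {A B : Finset α} (hAB : A ⊆ B) {e : α} (he : e ∉ B) :
    marginalGain f B e ≤ marginalGain f A e := by
  have hunion : insert e A ⊔ B = insert e B := by
    rw [Finset.sup_eq_union, Finset.insert_union, Finset.union_eq_right.mpr hAB]
  have hinter : insert e A ⊓ B = A := by
    rw [Finset.inf_eq_inter, Finset.insert_inter_of_notMem he, Finset.inter_eq_left.mpr hAB]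
  have hsub := hf (insert e A) B
  rw [hunion, hinter] at hsub
  exact sub_le_sub_iff.mpr hsub

theorem sum_marginalGain_filter_lt [LinearOrder α] (f : Finset α → M) (B : Finset α) :
    ∑ e ∈ B, marginalGain f (B.filter (· < e)) e = f B - f ∅ := by
  induction B using Finset.induction_on_max with
  | empty => simp
  | insert a s hlt ih =>
    have ha : a ∉ s := fun h => lt_irrefl a (hlt a h)
    have filter_lt_max : (insert a s).filter (· < a) = s := by
      rw [Finset.filter_insert, if_neg (lt_irrefl a), Finset.filter_true_of_mem hlt]
    have filter_lt_old : ∀ e ∈ s, (insert a s).filter (· < e) = s.filter (· < e) := fun e he => by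
      rw [Finset.filter_insert, if_neg (hlt e he).not_gt]
    calc ∑ e ∈ insert a s, marginalGain f ((insert a s).filter (· < e)) e
        = marginalGain f s a + ∑ e ∈ s, marginalGain f (s.filter (· < e)) e := by
          rw [Finset.sum_insert ha, filter_lt_max]
          exact congrArg _ (Finset.sum_congr rfl fun e he => by rw [filter_lt_old e he])
      _ = (f (insert a s) - f s) + (f s - f ∅) := by rw [ih, marginalGain]
      _ = f (insert a s) - f ∅ := sub_add_sub_cancel _ _ _

theorem stmt_2_general [LinearOrder α] [PartialOrder M] [IsOrderedAddMonoid M]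
    {f : Finset α → M} (hf : Submodular f) {C : α → Finset α} {B : Finset α}
    (hC : ∀ e ∈ B, C e ⊆ B.filter (· < e)) :
    f B - f ∅ ≤ ∑ e ∈ B, marginalGain f (C e) e := by
  rw [← sum_marginalGain_filter_lt f B]
  exact Finset.sum_le_sum fun e he => hf.marginalGain_le_of_subset (hC e he) (by simp)

end

/-- First inequality in the proof of Lemma 3.3: under the stream setup, if
`C e` consists only of earlier elements of `B` for every `e ∈ B`, then
`f(B) ≤ w(B)`, where `w(e) := f(C(e) ∪ {e}) − f(C(e))`. -/
theorem stmt_2 {α : Type*} [Fintype α] [LinearOrder α]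
    (f : Finset α → ℝ)
    (hsub : ∀ A B : Finset α, f (A ∪ B) + f (A ∩ B) ≤ f A + f B)
    (hmono : ∀ A B : Finset α, A ⊆ B → f A ≤ f B)
    (hproper : f ∅ = 0)
    (hnonneg : ∀ A : Finset α, 0 ≤ f A)
    (C : α → Finset α)
    (hC : ∀ e, ∀ e' ∈ C e, e' < e)
    (B : Finset α)
    (hB : ∀ e ∈ B, C e ⊆ B.filter (fun e' => e' < e)) :
    f B ≤ ∑ e ∈ B, (f (insert e (C e)) - f (C e)) := by
  simpa only [hproper, sub_zero, marginalGain] using stmt_2_general (f := f) hsub hB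
end

section
/- Let E be a finite type, f : Finset E → ℝ a nonnegative monotone proper submodular function, and c a real with 0 ≤ c < 1. Suppose f(A ∪ {e}) − f(A) ≥ (1 − c)·f({e}) for every A ⊆ E and every e ∉ A. Then for every S ⊆ E and every assignment of a set C(e) ⊆ E with e ∉ C(e) to each e ∈ S, (1 − c)·f(S) ≤ ∑_{e∈S} (f(C(e) ∪ {e}) − f(C(e))). -/
theorem apply_sup_le_add_of_disjoint_of_submodular {L M : Type*} [Lattice L] [OrderBot L]
    [AddZeroClass M] [LE M] {f : L → M} (hsub : ∀ a b, f (a ⊔ b) + f (a ⊓ b) ≤ f a + f b)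
    (hbot : f ⊥ = 0) {a b : L} (hab : Disjoint a b) : f (a ⊔ b) ≤ f a + f b := by
  simpa only [hab.eq_bot, hbot, add_zero] using hsub a b

theorem apply_le_sum_singleton_of_disjoint_subadditive {α M : Type*} [DecidableEq α]
    [AddCommMonoid M] [Preorder M] [AddLeftMono M] {f : Finset α → M} (hempty : f ∅ ≤ 0)
    (hadd : ∀ A B, Disjoint A B → f (A ∪ B) ≤ f A + f B) (S : Finset α) :
    f S ≤ ∑ e ∈ S, f {e} := by
  induction S using Finset.induction_on with
  | empty => simpa only [Finset.sum_empty] using hempty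
  | insert a S ha ih =>
    calc f (insert a S) = f ({a} ∪ S) := by rw [Finset.insert_eq]
      _ ≤ f {a} + f S := hadd _ _ (Finset.disjoint_singleton_left.mpr ha)
      _ ≤ f {a} + ∑ e ∈ S, f {e} := by gcongr
      _ = ∑ e ∈ insert a S, f {e} := by rw [Finset.sum_insert ha]

theorem stmt_7_general {α R : Type*} [DecidableEq α] [Ring R] [PartialOrder R] [IsOrderedRing R]
    {f : Finset α → R} (hempty : f ∅ ≤ 0)
    (hadd : ∀ A B, Disjoint A B → f (A ∪ B) ≤ f A + f B)
    {c : R} (hc : c ≤ 1)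
    (hcurv : ∀ (A : Finset α) (e : α), e ∉ A → (1 - c) * f {e} ≤ f (insert e A) - f A)
    {S : Finset α} {C : α → Finset α} (hC : ∀ e ∈ S, e ∉ C e) :
    (1 - c) * f S ≤ ∑ e ∈ S, (f (insert e (C e)) - f (C e)) :=
  calc (1 - c) * f S ≤ (1 - c) * ∑ e ∈ S, f {e} :=
        mul_le_mul_of_nonneg_left
          (apply_le_sum_singleton_of_disjoint_subadditive hempty hadd S) (sub_nonneg.mpr hc)
    _ = ∑ e ∈ S, (1 - c) * f {e} := Finset.mul_sum ..
    _ ≤ ∑ e ∈ S, (f (insert e (C e)) - f (C e)) :=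
        Finset.sum_le_sum fun e he => hcurv (C e) e (hC e he)

/-- Key inequality in the proof of Lemma 3.4: under the curvature condition
with parameter `c`, for any set `S` and any assignment of a set `C e` (with
`e ∉ C e`) to each `e ∈ S`, `(1 − c)·f(S) ≤ ∑_{e∈S} (f(C(e) ∪ {e}) − f(C(e)))`. -/
theorem stmt_7 {α : Type*} [Fintype α] [DecidableEq α]
    (f : Finset α → ℝ)
    (hsub : ∀ A B : Finset α, f (A ∪ B) + f (A ∩ B) ≤ f A + f B)
    (hmono : ∀ A B : Finset α, A ⊆ B → f A ≤ f B)
    (hproper : f ∅ = 0)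
    (hnonneg : ∀ A : Finset α, 0 ≤ f A)
    (c : ℝ) (hc0 : 0 ≤ c) (hc1 : c < 1)
    (hcurv : ∀ (A : Finset α) (e : α), e ∉ A →
      (1 - c) * f {e} ≤ f (insert e A) - f A)
    (S : Finset α) (C : α → Finset α)
    (hCe : ∀ e ∈ S, e ∉ C e) :
    (1 - c) * f S ≤ ∑ e ∈ S, (f (insert e (C e)) - f (C e)) := by
  exact stmt_7_general hproper.le
    (fun _ _ => apply_sup_le_add_of_disjoint_of_submodular hsub hproper) hc1.le hcurv hCe
end

section
/- Let E be a finite type and f : Finset E → ℝ a nonnegative monotone proper submodular function. Then f satisfies f(A ∪ {e}) − f(A) ≥ f({e}) for every A ⊆ E and every e ∉ A if and only if f is modular, i.e., f(S) = ∑_{e∈S} f({e}) for every S ⊆ E. -/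
theorem forall_eq_sum_iff_insert_eq_add {α M : Type*} [DecidableEq α] [AddCommMonoid M]
    {f : Finset α → M} {g : α → M} :
    (∀ S : Finset α, f S = ∑ e ∈ S, g e) ↔
      f ∅ = 0 ∧ ∀ (A : Finset α) (e : α), e ∉ A → f (insert e A) = g e + f A := by
  constructor
  · intro hsum
    refine ⟨by rw [hsum, Finset.sum_empty], fun A e he ↦ ?_⟩
    rw [hsum, hsum, Finset.sum_insert he]
  · rintro ⟨hempty, hinsert⟩ S
    induction S using Finset.induction_on with
    | empty => rw [hempty, Finset.sum_empty]
    | insert e A he ih => rw [hinsert A e he, ih, Finset.sum_insert he]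

theorem map_union_le_add_of_submodular_of_disjoint {α M : Type*} [DecidableEq α]
    [AddZeroClass M] [LE M] {f : Finset α → M}
    (hsub : ∀ A B : Finset α, f (A ∪ B) + f (A ∩ B) ≤ f A + f B) (hproper : f ∅ = 0)
    {A B : Finset α} (hAB : Disjoint A B) : f (A ∪ B) ≤ f A + f B := by
  simpa only [Finset.disjoint_iff_inter_eq_empty.mp hAB, hproper, add_zero] using hsub A B

theorem stmt_9_general {α M : Type*} [DecidableEq α]
    [AddCommGroup M] [PartialOrder M] [IsOrderedAddMonoid M] (f : Finset α → M)
    (hsubadd : ∀ A B : Finset α, Disjoint A B → f (A ∪ B) ≤ f A + f B)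
    (hproper : f ∅ = 0) :
    (∀ (A : Finset α) (e : α), e ∉ A → f {e} ≤ f (insert e A) - f A) ↔
      (∀ S : Finset α, f S = ∑ e ∈ S, f {e}) := by
  have insert_le (A : Finset α) (e : α) (he : e ∉ A) : f (insert e A) ≤ f {e} + f A :=
    hsubadd {e} A (Finset.disjoint_singleton_left.mpr he)
  rw [forall_eq_sum_iff_insert_eq_add, and_iff_right hproper]
  refine forall₃_congr fun A e he ↦ ?_
  rw [le_sub_iff_add_le, (insert_le A e he).ge_iff_eq]

/-- The paper's claim that `curv(f) = 0` iff `f` is modular: a nonnegative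
monotone proper submodular function satisfies
`f(A ∪ {e}) − f(A) ≥ f({e})` for all `A` and `e ∉ A` iff
`f(S) = ∑_{e∈S} f({e})` for every `S`. -/
theorem stmt_9 {α : Type*} [Fintype α] [DecidableEq α]
    (f : Finset α → ℝ)
    (hsub : ∀ A B : Finset α, f (A ∪ B) + f (A ∩ B) ≤ f A + f B)
    (hmono : ∀ A B : Finset α, A ⊆ B → f A ≤ f B)
    (hproper : f ∅ = 0)
    (hnonneg : ∀ A : Finset α, 0 ≤ f A) :
    (∀ (A : Finset α) (e : α), e ∉ A → f {e} ≤ f (insert e A) - f A) ↔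
      (∀ S : Finset α, f S = ∑ e ∈ S, f {e}) :=
  stmt_9_general f (fun _ _ ↦ map_union_le_add_of_submodular_of_disjoint hsub hproper) hproper
end

section
/- Let V be a finite type, r ∈ V, and p : V → V a function with p(r) = r and such that for every v ∈ V there exists a natural number n with the n-fold iterate p^[n](v) = r (so (V, p, r) is a rooted tree with parent map p). For v ∈ V let the children of v be {u ∈ V : u ≠ v and p(u) = v}. Let w : V → ℝ be nonnegative and γ > 0 a real such that w(v) ≥ (1+γ)·∑_{u child of v} w(u) for every v ∈ V. Then ∑_{v ∈ V, v ≠ r} w(v) ≤ w(r)/γ. -/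
/-!
Double counting: every `u` that is not fixed by the parent map `p` is a child of exactly one node.
Summing the hypothesis `(1 + γ) * (weight of the children of v) ≤ w v` over all `v` therefore gives
`(1 + γ) * N ≤ R + N`, where `R` and `N` are the total weights of the roots (the fixed points of
`p`) and of the other nodes, so that `γ * N ≤ R`.
-/

/-- The children of `v` in the forest with parent map `p`, whose roots are the fixed points of `p`.
A root is not counted among its own children. -/
def children {V : Type*} [Fintype V] [DecidableEq V] (p : V → V) (v : V) : Finset V :=
  {u | u ≠ v ∧ p u = v}

section Forest

variable {V : Type*} [Fintype V] [DecidableEq V]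

theorem children_eq_filter_ne_filter_eq (p : V → V) (v : V) :
    children p v = {u ∈ ({u | p u ≠ u} : Finset V) | p u = v} := by
  ext u
  simp only [children, Finset.mem_filter, Finset.mem_univ, true_and]
  exact and_congr_left fun hu => by rw [hu, ne_comm]

theorem sum_sum_children {M : Type*} [AddCommMonoid M] (p : V → V) (w : V → M) :
    ∑ v, ∑ u ∈ children p v, w u = ∑ u with p u ≠ u, w u := by
  simp only [children_eq_filter_ne_filter_eq]
  exact Finset.sum_fiberwise _ p w

theorem mul_sum_nonroots_le_sum_roots {R : Type*} [Semiring R] [PartialOrder R]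
    [IsOrderedCancelAddMonoid R] {p : V → V} {w : V → R} {γ : R}
    (hkill : ∀ v, (1 + γ) * ∑ u ∈ children p v, w u ≤ w v) :
    γ * ∑ v with p v ≠ v, w v ≤ ∑ v with p v = v, w v := by
  refine le_of_add_le_add_right (a := ∑ v with p v ≠ v, w v) ?_
  calc γ * ∑ v with p v ≠ v, w v + ∑ v with p v ≠ v, w v
      = (1 + γ) * ∑ v, ∑ u ∈ children p v, w u := by
        rw [sum_sum_children, add_mul, one_mul, add_comm]
    _ = ∑ v, (1 + γ) * ∑ u ∈ children p v, w u := Finset.mul_sum ..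
    _ ≤ ∑ v, w v := Finset.sum_le_sum fun v _ => hkill v
    _ = ∑ v with p v = v, w v + ∑ v with p v ≠ v, w v :=
        (Finset.sum_filter_add_sum_filter_not ..).symm

theorem stmt_13_general {K : Type*} [Semifield K] [LinearOrder K] [IsStrictOrderedRing K]
    {p : V → V} {w : V → K} {γ : K} (hγ : 0 < γ)
    (hkill : ∀ v, (1 + γ) * ∑ u ∈ children p v, w u ≤ w v) :
    ∑ v with p v ≠ v, w v ≤ (∑ v with p v = v, w v) / γ :=
  (le_div_iff₀' hγ).2 (mul_sum_nonroots_le_sum_roots hkill)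

end Forest

theorem apply_eq_self_iff_of_forall_exists_iterate_eq {α : Type*} {f : α → α} {a : α}
    (ha : f a = a) (hreach : ∀ x, ∃ n : ℕ, f^[n] x = a) (x : α) : f x = x ↔ x = a := by
  refine ⟨fun hx => ?_, fun hx => hx ▸ ha⟩
  obtain ⟨n, hn⟩ := hreach x
  exact (Function.iterate_fixed hx n).symm.trans hn

/-- Lemma 4.1 (combinatorial form, killing trees): in a rooted tree in which
the weight of each node is at least `(1+γ)` times the total weight of its
children, the total weight of the strict descendants of the root is at most
`1/γ` times the weight of the root. -/
theorem stmt_13 {V : Type*} [Fintype V] [DecidableEq V]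
    (r : V) (p : V → V) (hpr : p r = r)
    (hreach : ∀ v : V, ∃ n : ℕ, p^[n] v = r)
    (w : V → ℝ) (hw : ∀ v, 0 ≤ w v)
    (γ : ℝ) (hγ : 0 < γ)
    (hkill : ∀ v : V,
      (1 + γ) * ∑ u ∈ Finset.univ.filter (fun u => u ≠ v ∧ p u = v), w u
        ≤ w v) :
    ∑ v ∈ Finset.univ.filter (fun v => v ≠ r), w v ≤ w r / γ := by
  have hroot := apply_eq_self_iff_of_forall_exists_iterate_eq hpr hreach
  simpa [hroot, Finset.filter_eq'] using stmt_13_general hγ hkill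
end

section
/- Let γ be a real with 0 < γ ≤ 1 and set κ := γ³/(2 + 3γ + γ² − γ³). Let O, W, B, F be nonnegative reals satisfying O ≤ (4 + 2/γ + 2γ)·W − (1 + 2/γ)·B, γ·(1+κ)·B ≥ (γ − κ)·W, and W ≤ F. Then O ≤ (3 + 3γ)·F. -/
/-!
The value of `κ` is chosen so that `γ - κ` and `γ * (1 + κ)` are in the same ratio as
`2 / γ + 1 - γ` and `1 + 2 / γ`. After rescaling, the lower bound on the retained weight `B` thus
says `(2 / γ + 1 - γ) * W ≤ (1 + 2 / γ) * B`, and substituting this into the bound on `O` cancels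
every `1 / γ` and leaves `(3 + 3 * γ) * W`.
-/

section Field

variable {𝕜 : Type*} [Field 𝕜] {γ : 𝕜}

/-- The constant `κ` of the multi-pass analysis, which governs how much of the weight of the final
matching was already retained from the previous pass. -/
def kappa (γ : 𝕜) : 𝕜 :=
  γ ^ 3 / (2 + 3 * γ + γ ^ 2 - γ ^ 3)

theorem sub_kappa (hD : 2 + 3 * γ + γ ^ 2 - γ ^ 3 ≠ 0) :
    γ - kappa γ = γ * (1 + γ) ^ 2 * (2 - γ) / (2 + 3 * γ + γ ^ 2 - γ ^ 3) := by
  rw [kappa, sub_div' hD]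
  ring

theorem one_add_kappa (hD : 2 + 3 * γ + γ ^ 2 - γ ^ 3 ≠ 0) :
    1 + kappa γ = (1 + γ) * (2 + γ) / (2 + 3 * γ + γ ^ 2 - γ ^ 3) := by
  rw [kappa, add_div' _ _ _ hD]
  ring

end Field

section LinearOrderedField

variable {𝕜 : Type*} [Field 𝕜] [LinearOrder 𝕜] [IsStrictOrderedRing 𝕜] {γ O W B F : 𝕜}

theorem kappa_denom_pos (hγ0 : γ ≠ 0) (hγ2 : γ ≤ 2) : 0 < 2 + 3 * γ + γ ^ 2 - γ ^ 3 :=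
  calc
    0 < (1 + γ) ^ 2 * (2 - γ) + γ ^ 2 :=
      add_pos_of_nonneg_of_pos (mul_nonneg (sq_nonneg _) (sub_nonneg.2 hγ2)) (by positivity)
    _ = 2 + 3 * γ + γ ^ 2 - γ ^ 3 := by ring

theorem mul_le_mul_of_sub_kappa_mul_le (hγ0 : γ ≠ 0) (hγ : -1 < γ)
    (hD : 0 < 2 + 3 * γ + γ ^ 2 - γ ^ 3) (h : (γ - kappa γ) * W ≤ γ * (1 + kappa γ) * B) :
    (2 / γ + 1 - γ) * W ≤ (1 + 2 / γ) * B := by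
  have h1γ : 0 < 1 + γ := by linarith
  have hscale : 0 ≤ (2 + 3 * γ + γ ^ 2 - γ ^ 3) / (γ ^ 2 * (1 + γ)) := by positivity
  rw [sub_kappa hD.ne', one_add_kappa hD.ne'] at h
  generalize 2 + 3 * γ + γ ^ 2 - γ ^ 3 = D at hD hscale h
  calc
    (2 / γ + 1 - γ) * W = D / (γ ^ 2 * (1 + γ)) * (γ * (1 + γ) ^ 2 * (2 - γ) / D * W) := by
      field_simp
      ring
    _ ≤ D / (γ ^ 2 * (1 + γ)) * (γ * ((1 + γ) * (2 + γ) / D) * B) :=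
      mul_le_mul_of_nonneg_left h hscale
    _ = (1 + 2 / γ) * B := by
      field_simp
      ring

theorem stmt_16_general (hγ0 : γ ≠ 0) (hγ : -1 < γ) (hD : 0 < 2 + 3 * γ + γ ^ 2 - γ ^ 3)
    (hO : O ≤ (4 + 2 / γ + 2 * γ) * W - (1 + 2 / γ) * B)
    (hB : (γ - kappa γ) * W ≤ γ * (1 + kappa γ) * B) (hF : W ≤ F) :
    O ≤ (3 + 3 * γ) * F :=
  calc
    O ≤ (4 + 2 / γ + 2 * γ) * W - (1 + 2 / γ) * B := hO
    _ ≤ (4 + 2 / γ + 2 * γ) * W - (2 / γ + 1 - γ) * W :=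
      sub_le_sub_left (mul_le_mul_of_sub_kappa_mul_le hγ0 hγ hD hB) _
    _ = (3 + 3 * γ) * W := by ring
    _ ≤ (3 + 3 * γ) * F := mul_le_mul_of_nonneg_left hF (by linarith)

end LinearOrderedField

/-- The arithmetic combination concluding the proof of Theorem 1.2: with
`κ = γ³/(2 + 3γ + γ² − γ³)`, if `O ≤ (4 + 2/γ + 2γ)W − (1 + 2/γ)B`,
`γ(1+κ)B ≥ (γ−κ)W`, and `W ≤ F`, then `O ≤ (3 + 3γ)F`. -/
theorem stmt_16 (γ : ℝ) (hγ0 : 0 < γ) (hγ1 : γ ≤ 1)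
    (O W B F : ℝ) (hO : 0 ≤ O) (hW : 0 ≤ W) (hB : 0 ≤ B) (hF : 0 ≤ F)
    (h1 : O ≤ (4 + 2 / γ + 2 * γ) * W - (1 + 2 / γ) * B)
    (h2 : (γ - γ ^ 3 / (2 + 3 * γ + γ ^ 2 - γ ^ 3)) * W
        ≤ γ * (1 + γ ^ 3 / (2 + 3 * γ + γ ^ 2 - γ ^ 3)) * B)
    (h3 : W ≤ F) :
    O ≤ (3 + 3 * γ) * F :=
  stmt_16_general hγ0.ne' (by linarith) (kappa_denom_pos hγ0.ne' (by linarith)) h1 h2 h3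
end
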